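/- arXiv:2505.04951 — 3 statements merged into one kernel-verified Lean document; each statement's English description precedes it below -/
import Mathlib

section
/- For every integer n ≥ 4, the averaged-prime analogue of the Brocard conjecture holds: π̄(p̄_{n+1}²) − π̄(p̄_n²) > 4. -/
open Finset Real

/-- `nthPrime n` is the n-th prime number with 1-based indexing:
`nthPrime 1 = 2`, `nthPrime 2 = 3`, `nthPrime 3 = 5`, ... -/
noncomputable def nthPrime (n : ℕ) : ℕ := Nat.nth Nat.Prime (n - 1)

/-- The arithmetic average of the first `n` primes. -/
noncomputable def avgPrime (n : ℕ) : ℝ := (1 / (n : ℝ)) * ∑ i ∈ Finset.Icc 1 n, (nthPrime i : ℝ)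

/-- The gap in the averaged primes. -/
noncomputable def avgGap (n : ℕ) : ℝ := avgPrime (n + 1) - avgPrime n

/-- The averaged-prime counting function `π̄(x) = #{i ≥ 1 : p̄_i ≤ x}`. -/
noncomputable def avgPrimeCount (x : ℝ) : ℕ := Nat.card {i : ℕ | 1 ≤ i ∧ avgPrime i ≤ x}

/-- The ordinary prime counting function for a real argument. -/
noncomputable def primeCount (x : ℝ) : ℕ := Nat.card {q : ℕ | q.Prime ∧ (q : ℝ) ≤ x}

/-!
The increments of the averages are `p̄_{k+1} - p̄_k = (p_{k+1} - p̄_k) / (k + 1)`. Primes beyond `2`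
are odd, so for `n ≥ 4` the increment at `n` is at least `1`, and `p̄_{n+1} ^ 2 - p̄_n ^ 2` is at
least `5 * t` with `t = (2 * p̄_n + 1) / 5`. On the other hand Chebyshev's lower bound for `ψ` makes
`p_k` at most of order `k * log k`, so the increments of the averages near `p̄_n ^ 2` grow only
logarithmically in `p̄_n`. For `n ≥ 22` they are at most `t`, and the five averages that follow
`p̄_n ^ 2` do not exceed `p̄_{n+1} ^ 2`. The cases `4 ≤ n < 22` are a computation with the primes
below `2700`.
-/

/-- The sum `p_1 + ⋯ + p_n` of the first `n` primes, so that `p̄_n = primeSum n / n`. In terms of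
`Nat.nth`, which counts from `0`, the last summand is `Nat.nth Nat.Prime (n - 1)`. -/
noncomputable def primeSum (n : ℕ) : ℕ := ∑ i ∈ range n, Nat.nth Nat.Prime i

theorem primeSum_succ (n : ℕ) : primeSum (n + 1) = primeSum n + Nat.nth Nat.Prime n :=
  sum_range_succ _ _

theorem avgPrime_eq_primeSum_div (n : ℕ) : avgPrime n = primeSum n / n := by
  have sum_eq : ∑ i ∈ Icc 1 n, (nthPrime i : ℝ) = primeSum n := by
    induction n with
    | zero => simp [primeSum]
    | succ n ih =>
      rw [sum_Icc_succ_top (by lia), ih, primeSum_succ, nthPrime, Nat.add_sub_cancel,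
        Nat.cast_add]
  rw [avgPrime, sum_eq, one_div_mul_eq_div]

/-! ### Lower bounds from the parity of primes -/

theorem nth_prime_strictMono : StrictMono (Nat.nth Nat.Prime) :=
  Nat.nth_strictMono Nat.infinite_setOfPred_prime

theorem odd_nth_prime {k : ℕ} (hk : k ≠ 0) : Odd (Nat.nth Nat.Prime k) := by
  refine (Nat.prime_nth_prime k).odd_of_ne_two ?_
  rw [← Nat.nth_prime_zero_eq_two]
  exact nth_prime_strictMono.injective.ne hk

theorem nth_prime_add_two_le {k : ℕ} (hk : k ≠ 0) :
    Nat.nth Nat.Prime k + 2 ≤ Nat.nth Nat.Prime (k + 1) := by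
  obtain ⟨a, ha⟩ := odd_nth_prime hk
  obtain ⟨b, hb⟩ := odd_nth_prime k.succ_ne_zero
  have := nth_prime_strictMono k.lt_succ_self
  lia

theorem two_mul_add_one_le_nth_prime (k : ℕ) : 2 * k + 1 ≤ Nat.nth Nat.Prime k := by
  induction k with
  | zero => simp [Nat.nth_prime_zero_eq_two]
  | succ k ih =>
    obtain rfl | hk := eq_or_ne k 0
    · simp [Nat.nth_prime_one_eq_three]
    · linarith [nth_prime_add_two_le hk]

theorem sq_le_primeSum (n : ℕ) : n ^ 2 ≤ primeSum n := by
  induction n with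
  | zero => simp
  | succ n ih =>
    rw [primeSum_succ]
    linarith [two_mul_add_one_le_nth_prime n]

theorem natCast_le_avgPrime (n : ℕ) : (n : ℝ) ≤ avgPrime n := by
  obtain rfl | hn := n.eq_zero_or_pos
  · simp [avgPrime]
  · rw [avgPrime_eq_primeSum_div, le_div_iff₀ (by positivity), ← sq]
    exact_mod_cast sq_le_primeSum n

-- Passing from `n` to `n + 1` increases the slack by `(n + 1) * (p_{n+2} - p_{n+1} - 2)`.
theorem primeSum_add_mul_succ_le {n : ℕ} (hn : 4 ≤ n) :
    primeSum n + n * (n + 1) ≤ n * Nat.nth Nat.Prime n := by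
  induction n, hn using Nat.le_induction with
  | base =>
    simp [primeSum, sum_range_succ, Nat.nth_prime_zero_eq_two, Nat.nth_prime_one_eq_three,
      Nat.nth_prime_two_eq_five, Nat.nth_prime_three_eq_seven, Nat.nth_prime_four_eq_eleven]
  | succ n hn ih =>
    rw [primeSum_succ]
    nlinarith [nth_prime_add_two_le (show n ≠ 0 by lia)]

/-! ### Increments of the averages and the counting function -/

theorem avgPrime_succ_sub (n : ℕ) :
    avgPrime (n + 1) - avgPrime n = (Nat.nth Nat.Prime n - avgPrime n) / (n + 1) := by
  obtain rfl | hn := n.eq_zero_or_pos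
  · simp [avgPrime_eq_primeSum_div, primeSum]
  · rw [avgPrime_eq_primeSum_div, avgPrime_eq_primeSum_div, primeSum_succ]
    push_cast
    field

theorem avgPrime_lt_nth_prime (n : ℕ) : avgPrime n < Nat.nth Nat.Prime n := by
  obtain rfl | hn := n.eq_zero_or_pos
  · simp [avgPrime, Nat.nth_prime_zero_eq_two]
  · have sum_lt : primeSum n < n * Nat.nth Nat.Prime n := calc
      primeSum n < ∑ _i ∈ range n, Nat.nth Nat.Prime n :=
        sum_lt_sum_of_nonempty (nonempty_range_iff.2 hn.ne') fun i hi ↦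
          nth_prime_strictMono (mem_range.1 hi)
      _ = n * Nat.nth Nat.Prime n := by simp
    rw [avgPrime_eq_primeSum_div, div_lt_iff₀' (by positivity)]
    exact_mod_cast sum_lt

theorem avgPrime_strictMono : StrictMono avgPrime := by
  refine strictMono_nat_of_lt_succ fun n ↦ sub_pos.1 ?_
  rw [avgPrime_succ_sub]
  exact div_pos (sub_pos.2 (avgPrime_lt_nth_prime n)) (by positivity)

theorem avgPrime_add_one_le {n : ℕ} (hn : 4 ≤ n) : avgPrime n + 1 ≤ avgPrime (n + 1) := by
  have avg_le : avgPrime n ≤ Nat.nth Nat.Prime n - (n + 1) := by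
    have sum_le : (primeSum n + n * (n + 1) : ℝ) ≤ n * Nat.nth Nat.Prime n :=
      mod_cast primeSum_add_mul_succ_le hn
    rw [avgPrime_eq_primeSum_div, div_le_iff₀ (by positivity)]
    linarith
  have one_le_increment : 1 ≤ avgPrime (n + 1) - avgPrime n := by
    rw [avgPrime_succ_sub, one_le_div (by positivity)]
    linarith
  linarith

theorem le_avgPrimeCount_iff {m : ℕ} {x : ℝ} (hm : 1 ≤ m) :
    m ≤ avgPrimeCount x ↔ avgPrime m ≤ x := by
  change m ≤ {i | 1 ≤ i ∧ avgPrime i ≤ x}.ncard ↔ _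
  constructor
  · contrapose!
    intro x_lt
    have subset : {i | 1 ≤ i ∧ avgPrime i ≤ x} ⊆ ↑(Ico 1 m) := fun i ⟨one_le, avg_le⟩ ↦
      mem_coe.2 <| mem_Ico.2
        ⟨one_le, avgPrime_strictMono.lt_iff_lt.1 (avg_le.trans_lt x_lt)⟩
    have card_le := Set.ncard_le_ncard subset
    rw [Set.ncard_coe_finset, Nat.card_Ico] at card_le
    lia
  · intro avg_le
    have finite : {i | 1 ≤ i ∧ avgPrime i ≤ x}.Finite :=
      (Set.finite_Iic ⌊x⌋₊).subset fun i hi ↦ Nat.le_floor ((natCast_le_avgPrime i).trans hi.2)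
    have subset : ↑(Icc 1 m) ⊆ {i | 1 ≤ i ∧ avgPrime i ≤ x} := fun i hi ↦
      have ⟨one_le, le_m⟩ := mem_Icc.1 (mem_coe.1 hi)
      ⟨one_le, (avgPrime_strictMono.monotone le_m).trans avg_le⟩
    simpa using Set.ncard_le_ncard subset finite

/-! ### A Chebyshev upper bound for the increments -/

theorem nth_prime_sub_one_mul_log_two_le (k : ℕ) :
    (Nat.nth Nat.Prime k - 1) * log 2 ≤ (k + 1) * log (Nat.nth Nat.Prime k) := by
  obtain ⟨q, hq⟩ := Nat.exists_eq_succ_of_ne_zero (Nat.prime_nth_prime k).ne_zero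
  have count_eq : Nat.primeCounting q = k := by
    rw [Nat.primeCounting, ← Nat.succ_eq_add_one, ← hq, Nat.primeCounting'_nth_eq]
  have chebyshev : q * log 2 - log (q + 1) ≤ k * log q :=
    count_eq ▸ (Chebyshev.psi_ge q).trans (Chebyshev.psi_le_primeCounting_mul_log q)
  have q_pos : (0 : ℝ) < q := by
    have := (Nat.prime_nth_prime k).two_le
    exact_mod_cast (show 0 < q by lia)
  have log_le : log q ≤ log (q + 1) := log_le_log q_pos (by linarith)
  rw [hq, Nat.cast_succ]
  linarith [mul_le_mul_of_nonneg_left log_le k.cast_nonneg]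

theorem log_div_sub_one_le {x y : ℝ} (hy : 1 < y) (hyx : y ≤ x) :
    log x / (x - 1) ≤ log y / (y - 1) := by
  have slope_le := strictConcaveOn_log_Ioi.concaveOn.antitoneOn_slope_gt (x := 1) (by simp)
    ⟨zero_lt_one.trans hy, hy⟩ ⟨zero_lt_one.trans (hy.trans_le hyx), hy.trans_le hyx⟩ hyx
  simpa [slope_def_field] using slope_le

theorem nth_prime_lt_of_mul_log_lt {k : ℕ} {y : ℝ} (hy : 1 < y)
    (h : (k + 1) * log y < (y - 1) * log 2) : Nat.nth Nat.Prime k < y := by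
  by_contra! y_le
  have y_sub_one_pos : 0 < y - 1 := by linarith
  have prime_sub_one_pos : 0 < (Nat.nth Nat.Prime k - 1 : ℝ) := by linarith
  have : (k + 1) * log y < (k + 1) * log y := calc
    _ < (y - 1) * log 2 := h
    _ ≤ (y - 1) * ((k + 1) * (log (Nat.nth Nat.Prime k) / (Nat.nth Nat.Prime k - 1))) := by
      gcongr
      rw [← mul_div_assoc, le_div_iff₀' prime_sub_one_pos]
      exact nth_prime_sub_one_mul_log_two_le k
    _ ≤ (y - 1) * ((k + 1) * (log y / (y - 1))) := by
      gcongr ?_ * (_ * ?_)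
      exact log_div_sub_one_le hy y_le
    _ = (k + 1) * log y := by field
  exact this.false

theorem avgPrime_succ_le_add {k : ℕ} {t : ℝ} (hk : 1 ≤ k) (ht : 0 < t)
    (h : t * (k + 1) + 1 < 2 ^ t) : avgPrime (k + 1) ≤ avgPrime k + t := by
  have prime_lt : Nat.nth Nat.Prime k < t * (k + 1) + 1 := by
    refine nth_prime_lt_of_mul_log_lt (lt_add_of_pos_left 1 (by positivity)) ?_
    have log_lt : log (t * (k + 1) + 1) < t * log 2 := by
      rw [← log_rpow two_pos]
      exact log_lt_log (by positivity) h
    linarith [mul_lt_mul_of_pos_left log_lt (show (0 : ℝ) < k + 1 by positivity)]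
  have one_le_avg : 1 ≤ avgPrime k := (Nat.one_le_cast.2 hk).trans (natCast_le_avgPrime k)
  have increment_le : avgPrime (k + 1) - avgPrime k ≤ t := by
    rw [avgPrime_succ_sub, div_le_iff₀ (by positivity)]
    linarith
  linarith

theorem avgPrime_add_le {m j : ℕ} {t : ℝ} (hm : 1 ≤ m) (ht : 0 < t)
    (h : t * (m + j) + 1 < 2 ^ t) : avgPrime (m + j) ≤ avgPrime m + j * t := by
  induction j with
  | zero => simp
  | succ j ih =>
    push_cast at h ⊢
    rw [← add_assoc]
    have step : avgPrime (m + j + 1) ≤ avgPrime (m + j) + t :=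
      avgPrime_succ_le_add (by lia) ht (by push_cast; linarith)
    linarith [ih (by linarith)]

theorem mul_cube_lt_two_rpow {t : ℝ} (ht : 29 / 2 ≤ t) : 25 / 4 * t ^ 3 < 2 ^ t := by
  have t_pos : 0 < t := by linarith
  -- the tangent line to `log` at `29 / 2`
  have log_le : log t ≤ log (29 / 2) + (t / (29 / 2) - 1) := by
    have := log_le_sub_one_of_pos (show 0 < t / (29 / 2) by positivity)
    rw [log_div t_pos.ne' (by norm_num)] at this
    linarith
  have log_base_lt : log (25 / 4) + 3 * log (29 / 2) < 29 / 2 * log 2 := by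
    have : log ((25 / 4 * (29 / 2) ^ 3) ^ 2) < log (2 ^ 29) :=
      log_lt_log (by positivity) (by norm_num)
    rw [log_pow, log_mul (by norm_num) (by norm_num), log_pow, log_pow] at this
    push_cast at this
    linarith
  rw [← log_lt_log_iff (by positivity) (by positivity), log_rpow two_pos,
    log_mul (by norm_num) (by positivity), log_pow]
  push_cast
  nlinarith [log_two_gt_d9]

/-! ### Averages of small primes -/

theorem prime_iff_coprime_factorial {m b : ℕ} (hm : m ≠ 1) (hb : b < m) (hmb : m < (b + 1) ^ 2) :
    m.Prime ↔ m.Coprime b.factorial := by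
  refine ⟨fun h ↦ h.coprime_factorial_of_lt hb, fun coprime ↦ ?_⟩
  have b_lt : b < m.minFac := (Nat.coprime_factorial_iff hm).1 coprime
  by_contra not_prime
  have minFac_sq_le : m.minFac ^ 2 ≤ m := Nat.minFac_sq_le_self (by lia) not_prime
  exact (hmb.trans_le (Nat.pow_le_pow_left b_lt 2)).not_ge minFac_sq_le

theorem filter_range_eq_map_nth (p : ℕ → Prop) [DecidablePred p] (N : ℕ) :
    (List.range N).filter p = (List.range (Nat.count p N)).map (Nat.nth p) := by
  induction N with
  | zero => simp
  | succ N ih =>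
    rw [List.range_succ, List.filter_append, ih, Nat.count_succ]
    by_cases h : p N
    · simp [h, List.range_succ, Nat.nth_count h]
    · simp [h]

/-- The primes below `2700`, in increasing order. Since `2700 < 52 ^ 2`, they are found by the
coprimality test `prime_iff_coprime_factorial`, which the kernel evaluates much faster than the
`Decidable` instance of `Nat.Prime`. -/
def smallPrimes : List ℕ :=
  (List.range 2700).filter fun m ↦ 2 ≤ m ∧ m.Coprime (min (m - 1) 51).factorial

theorem smallPrimes_eq_filter_prime : smallPrimes = (List.range 2700).filter Nat.Prime := by
  refine List.filter_congr fun m hm ↦ decide_eq_decide.2 ?_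
  rw [List.mem_range] at hm
  by_cases two_le : 2 ≤ m
  · have lt_sq : m < (min (m - 1) 51 + 1) ^ 2 := by
      obtain h | h := min_cases (m - 1) 51 <;> rw [h.1]
      · rw [Nat.sub_add_cancel (by lia)]
        nlinarith
      · lia
    simp [two_le, prime_iff_coprime_factorial (by lia) (by lia : min (m - 1) 51 < m) lt_sq]
  · simp [two_le, mt Nat.Prime.two_le two_le]

theorem primeSum_eq_sum_take_smallPrimes {k : ℕ} (hk : k ≤ smallPrimes.length) :
    primeSum k = (smallPrimes.take k).sum := by
  rw [smallPrimes_eq_filter_prime, filter_range_eq_map_nth] at hk ⊢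
  rw [List.length_map, List.length_range] at hk
  rw [← List.map_take, List.take_range, min_eq_left hk]
  rfl

theorem length_smallPrimes : smallPrimes.length = 393 := by decide +kernel

theorem primeSum_twentyTwo : primeSum 22 = 791 := by
  rw [primeSum_eq_sum_take_smallPrimes (by rw [length_smallPrimes]; lia)]
  decide +kernel

-- The quadratic `n * (n - 3) + 10` was found numerically: with `m` its value at `n`, the averages
-- `p̄_m, …, p̄_{m+4}` lie between `p̄_n ^ 2` and `p̄_{n+1} ^ 2` in this range of `n`.
theorem sum_take_smallPrimes_bounds :
    ∀ n < 22, 4 ≤ n →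
      (smallPrimes.take n).sum ^ 2 * (n * (n - 3) + 10) <
        (smallPrimes.take (n * (n - 3) + 10)).sum * n ^ 2 ∧
      (smallPrimes.take (n * (n - 3) + 14)).sum * (n + 1) ^ 2 ≤
        (smallPrimes.take (n + 1)).sum ^ 2 * (n * (n - 3) + 14) := by
  decide +kernel

theorem primeSum_bounds {n : ℕ} (hn : 4 ≤ n) (hn' : n < 22) :
    primeSum n ^ 2 * (n * (n - 3) + 10) < primeSum (n * (n - 3) + 10) * n ^ 2 ∧
      primeSum (n * (n - 3) + 14) * (n + 1) ^ 2 ≤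
        primeSum (n + 1) ^ 2 * (n * (n - 3) + 14) := by
  have length_eq := length_smallPrimes
  have index_le : n * (n - 3) ≤ 21 * 18 := Nat.mul_le_mul (by lia) (by lia)
  rw [primeSum_eq_sum_take_smallPrimes (by lia : n ≤ _),
    primeSum_eq_sum_take_smallPrimes (by lia : n + 1 ≤ _),
    primeSum_eq_sum_take_smallPrimes (by lia : n * (n - 3) + 10 ≤ _),
    primeSum_eq_sum_take_smallPrimes (by lia : n * (n - 3) + 14 ≤ _)]
  exact sum_take_smallPrimes_bounds n hn' hn

/-! ### Five averaged primes between consecutive squares -/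

theorem avgPrimeCount_sq_add_five_le_of_lt {n : ℕ} (hn : 4 ≤ n) (hn' : n < 22) :
    avgPrimeCount (avgPrime n ^ 2) + 5 ≤ avgPrimeCount (avgPrime (n + 1) ^ 2) := by
  obtain ⟨sums_lt, sums_le⟩ := primeSum_bounds hn hn'
  have sq_lt : avgPrime n ^ 2 < avgPrime (n * (n - 3) + 10) := by
    rw [avgPrime_eq_primeSum_div, avgPrime_eq_primeSum_div, div_pow,
      div_lt_div_iff₀ (by positivity) (by positivity)]
    exact_mod_cast sums_lt
  have le_sq : avgPrime (n * (n - 3) + 14) ≤ avgPrime (n + 1) ^ 2 := by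
    rw [avgPrime_eq_primeSum_div, avgPrime_eq_primeSum_div, div_pow,
      div_le_div_iff₀ (by positivity) (by positivity)]
    exact_mod_cast sums_le
  have count_lt := mt (le_avgPrimeCount_iff (by lia)).1 sq_lt.not_ge
  have le_count := (le_avgPrimeCount_iff (by lia)).2 le_sq
  lia

theorem avgPrimeCount_sq_add_five_le_of_le {n : ℕ} (hn : 22 ≤ n) :
    avgPrimeCount (avgPrime n ^ 2) + 5 ≤ avgPrimeCount (avgPrime (n + 1) ^ 2) := by
  have le_avg : 791 / 22 ≤ avgPrime n := by
    have := avgPrime_strictMono.monotone hn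
    rwa [avgPrime_eq_primeSum_div 22, primeSum_twentyTwo] at this
  have avg_le_sq : avgPrime n ≤ avgPrime n ^ 2 := by nlinarith
  have one_le_count : 1 ≤ avgPrimeCount (avgPrime n ^ 2) :=
    (le_avgPrimeCount_iff le_rfl).2 <|
      (avgPrime_strictMono.monotone (by lia : 1 ≤ n)).trans avg_le_sq
  have avg_count_le : avgPrime (avgPrimeCount (avgPrime n ^ 2)) ≤ avgPrime n ^ 2 :=
    (le_avgPrimeCount_iff one_le_count).1 le_rfl
  have count_le := (natCast_le_avgPrime _).trans avg_count_le
  have avg_add_one_le := avgPrime_add_one_le (show 4 ≤ n by lia)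
  rw [le_avgPrimeCount_iff (by lia)]
  generalize avgPrimeCount (avgPrime n ^ 2) = m at *
  generalize avgPrime n = a at *
  -- `t` is chosen so that `a ^ 2 + 5 * t = (a + 1) ^ 2`, and `25 / 4 * t ^ 2 = (a + 1 / 2) ^ 2`.
  obtain ⟨t, ht⟩ : ∃ t, t = (2 * a + 1) / 5 := ⟨_, rfl⟩
  have t_ge : 29 / 2 ≤ t := by linarith
  have lt_two_rpow : t * (m + (5 : ℕ)) + 1 < 2 ^ t := calc
    _ ≤ t * (m + 6) := by push_cast; linarith
    _ ≤ t * (a + 1 / 2) ^ 2 := by gcongr; linarith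
    _ = 25 / 4 * t ^ 3 := by rw [show a = (5 * t - 1) / 2 by linarith]; ring
    _ < 2 ^ t := mul_cube_lt_two_rpow t_ge
  calc avgPrime (m + 5) ≤ avgPrime m + (5 : ℕ) * t :=
        avgPrime_add_le one_le_count (by linarith) lt_two_rpow
    _ ≤ a ^ 2 + 5 * t := by push_cast; gcongr
    _ = (a + 1) ^ 2 := by rw [ht]; ring
    _ ≤ avgPrime (n + 1) ^ 2 := by gcongr

theorem stmt15 (n : ℕ) (hn : 4 ≤ n) :
    (avgPrimeCount (avgPrime (n + 1) ^ 2) : ℝ) - (avgPrimeCount (avgPrime n ^ 2) : ℝ) > 4 := by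
  have five_le : avgPrimeCount (avgPrime n ^ 2) + 5 ≤ avgPrimeCount (avgPrime (n + 1) ^ 2) := by
    obtain small | large := lt_or_ge n 22
    · exact avgPrimeCount_sq_add_five_le_of_lt hn small
    · exact avgPrimeCount_sq_add_five_le_of_le large
  have five_le_cast : (avgPrimeCount (avgPrime n ^ 2) + 5 : ℝ) ≤
      avgPrimeCount (avgPrime (n + 1) ^ 2) := mod_cast five_le
  linarith
end

section
/- For every integer n ≥ 1, the averaged-prime analogue of the Firoozbakht conjecture holds: (p̄_{n+1})^{1/(n+1)} < (p̄_n)^{1/n}; equivalently, n·ln p̄_{n+1} < (n+1)·ln p̄_n. -/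
open Finset Real

/-!
Write `a = p̄_n` and `q = p_{n+1}`, so that `p̄_{n+1} = (n a + q) / (n + 1)`. Raising to the power
`n (n + 1)`, the claim is `p̄_{n+1} ^ n < a ^ (n + 1)`, and `1 + t ≤ exp t` shows that it follows
from `q ≤ a (1 + log a)`.

For large `q` this is a matter of constants. At most `8` out of `30` consecutive integers
above `30` are prime, hence `a ≥ (15 n - 95) / 8`, while Chebyshev's lower bound for `ψ` gives
roughly `q ≤ n log q / log 2`. Since `15 / 8 > 1 / log 2`, the factor `1 + log a` wins, and
explicitly so for `q ≥ 700`. For `q < 700` the inequality `p̄_{n+1} ^ n < a ^ (n + 1)` between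
rational numbers is evaluated.
-/

/-- The numbers below `m` that survive trial division by the elements of `s`. If `s` is the set of
primes below `b` and `m ≤ b ^ 2`, these are the primes below `m`, in a form that the kernel
evaluates much faster than `Nat.primesBelow m`. -/
def trialDivisionPrimes (s : Finset ℕ) (m : ℕ) : Finset ℕ :=
  {k ∈ range m | 2 ≤ k ∧ ∀ p ∈ s, p ∣ k → p = k}

lemma primesBelow_eq_trialDivisionPrimes {b m : ℕ} {s : Finset ℕ} (hs : Nat.primesBelow b = s)
    (hm : m ≤ b ^ 2) : Nat.primesBelow m = trialDivisionPrimes s m := by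
  subst hs
  refine filter_congr fun k hk => ⟨fun hprime => ⟨hprime.two_le, fun p hp hdvd => ?_⟩, ?_⟩
  · exact (Nat.prime_dvd_prime_iff_eq (Nat.prime_of_mem_primesBelow hp) hprime).1 hdvd
  · rintro ⟨htwo, hdvd⟩
    by_contra hcomposite
    have hminFac : k.minFac.Prime := Nat.minFac_prime (by lia)
    have hlt : k.minFac < b := by
      have := Nat.minFac_sq_le_self (by lia) hcomposite
      exact lt_of_pow_lt_pow_left₀ 2 b.zero_le (by have := mem_range.1 hk; lia)
    have heq := hdvd _ (Nat.mem_primesBelow.2 ⟨hlt, hminFac⟩) k.minFac_dvd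
    exact hcomposite (heq ▸ hminFac)

lemma primesBelow_thirteen : Nat.primesBelow 13 = {2, 3, 5, 7, 11} := by
  decide +kernel

lemma primesBelow_twenty_nine : Nat.primesBelow 29 = {2, 3, 5, 7, 11, 13, 17, 19, 23} := by
  decide +kernel

lemma sum_range_nth_eq_sum_filter_range {M : Type*} [AddCommMonoid M] {p : ℕ → Prop}
    [DecidablePred p] (hp : (Set.ofPred p).Infinite) (f : ℕ → M) (n : ℕ) :
    ∑ i ∈ range n, f (Nat.nth p i) = ∑ k ∈ range (Nat.nth p n) with p k, f k := by
  induction n with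
  | zero =>
    have hempty : {k ∈ range (Nat.nth p 0) | p k} = ∅ := by
      rw [← card_eq_zero, ← Nat.count_eq_card_filter_range, Nat.count_nth_zero]
    rw [hempty, range_zero, sum_empty, sum_empty]
  | succ n ih =>
    rw [sum_range_succ, ih, Nat.filter_range_nth_eq_insert_of_infinite hp, sum_insert (by simp),
      add_comm]

lemma card_primesBelow_nth_prime (n : ℕ) : #(Nat.nth Nat.Prime n).primesBelow = n := by
  rw [Nat.primesBelow_card_eq_primeCounting', Nat.primeCounting'_nth_eq]

lemma avgPrime_eq_sum_range_div (n : ℕ) :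
    avgPrime n = (∑ i ∈ range n, (Nat.nth Nat.Prime i : ℝ)) / n := by
  simp only [avgPrime, nthPrime, one_div_mul_eq_div, range_eq_Ico, sum_Ico_eq_sum_range,
    ← Ico_add_one_right_eq_Icc, Nat.sub_zero, Nat.add_sub_cancel, Nat.add_sub_cancel_left, zero_add]

lemma avgPrime_eq_sum_primesBelow_div (n : ℕ) :
    avgPrime n = (∑ p ∈ (Nat.nth Nat.Prime n).primesBelow, p : ℕ) / (n : ℝ) := by
  rw [avgPrime_eq_sum_range_div, Nat.cast_sum, Nat.primesBelow,
    sum_range_nth_eq_sum_filter_range Nat.infinite_setOfPred_prime fun p => (p : ℝ)]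

lemma avgPrime_succ (n : ℕ) :
    avgPrime (n + 1) = (n * avgPrime n + Nat.nth Nat.Prime n) / (n + 1) := by
  rcases n.eq_zero_or_pos with rfl | hn
  · simp [avgPrime_eq_sum_range_div]
  · rw [avgPrime_eq_sum_range_div, avgPrime_eq_sum_range_div, sum_range_succ, Nat.cast_add_one,
      mul_div_cancel₀ _ (by positivity)]

lemma avgPrime_nonneg (n : ℕ) : 0 ≤ avgPrime n := by
  rw [avgPrime_eq_sum_range_div]
  positivity

lemma rpow_one_div_lt_rpow_one_div_iff {x y : ℝ} (hx : 0 ≤ x) (hy : 0 ≤ y) {m n : ℕ} (hm : m ≠ 0)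
    (hn : n ≠ 0) : x ^ (1 / (m : ℝ)) < y ^ (1 / (n : ℝ)) ↔ x ^ n < y ^ m := by
  have hxpow : (x ^ (1 / (m : ℝ))) ^ (m * n) = x ^ n := by
    rw [pow_mul, one_div, rpow_inv_natCast_pow hx hm]
  have hypow : (y ^ (1 / (n : ℝ))) ^ (m * n) = y ^ m := by
    rw [mul_comm, pow_mul, one_div, rpow_inv_natCast_pow hy hn]
  rw [← hxpow, ← hypow, pow_lt_pow_iff_left₀ (by positivity) (by positivity) (by positivity)]

lemma pow_lt_pow_succ_of_le_mul_one_add_log {a q : ℝ} (ha : 1 < a) (hq : 0 ≤ q)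
    (h : q ≤ a * (1 + log a)) (n : ℕ) : ((n * a + q) / (n + 1)) ^ n < a ^ (n + 1) := by
  have hlog : 0 < log a := log_pos ha
  have hmean : (n * a + q) / (n + 1) ≤ a * exp (log a / (n + 1)) :=
    calc (n * a + q) / (n + 1) ≤ (n * a + a * (1 + log a)) / (n + 1) := by gcongr
      _ = a * (log a / (n + 1) + 1) := by field_simp; ring
      _ ≤ a * exp (log a / (n + 1)) := by gcongr; exact add_one_le_exp _
  have hexp : n * (log a / (n + 1)) < log a := by
    rw [mul_div_assoc', div_lt_iff₀ (by positivity)]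
    linarith
  calc ((n * a + q) / (n + 1)) ^ n ≤ (a * exp (log a / (n + 1))) ^ n := by gcongr
    _ = a ^ n * exp (n * (log a / (n + 1))) := by rw [mul_pow, ← exp_nat_mul]
    _ < a ^ n * exp (log a) := by gcongr
    _ = a ^ (n + 1) := by rw [exp_log (by linarith), pow_succ]

lemma log_le_div_two_pow_add {x : ℝ} (hx : 0 < x) (k : ℕ) :
    log x ≤ x / 2 ^ k + (k * log 2 - 1) := by
  have := log_le_sub_one_of_pos (x := x / 2 ^ k) (by positivity)
  rw [log_div hx.ne' (by positivity), log_pow] at this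
  linarith

lemma log_add_one_le_log_add_inv {x : ℝ} (hx : 0 < x) : log (x + 1) ≤ log x + x⁻¹ := by
  have := log_le_sub_one_of_pos (x := (x + 1) / x) (by positivity)
  rw [log_div (by positivity) hx.ne', add_div, div_self hx.ne', one_div] at this
  linarith

lemma le_mul_one_add_log_of_le_mul_log {x y : ℝ} (hx : 1 < x) (h : 1.15 * x ≤ y * log x) :
    x ≤ y * (1 + log y) := by
  set L := log x
  have hL : 0 < L := log_pos hx
  have hy : 1.15 * x / L ≤ y := (div_le_iff₀ hL).2 h
  have hlogy : log 1.15 + L - log L ≤ log y := by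
    have := log_le_log (by positivity) hy
    rwa [log_div (by positivity) hL.ne', log_mul (by norm_num) (by positivity)] at this
  -- Bounding `log` by its tangent at `8` costs `L / 8`, which `1.15 * (7 / 8) > 1` can afford.
  have hlogL : log L ≤ L / 8 + 1.0795 := by
    have := log_le_div_two_pow_add hL 3
    norm_num at this ⊢
    linarith [log_two_lt_d9]
  have hlogc : 0.13 ≤ log (1.15 : ℝ) :=
    le_trans (by norm_num) (one_sub_inv_le_log_of_pos (by norm_num))
  have hfactor : L / 1.15 ≤ 1 + log y := by
    rw [div_le_iff₀ (by norm_num)]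
    linarith
  calc x = 1.15 * x / L * (L / 1.15) := by field_simp
    _ ≤ y * (1 + log y) := by gcongr; exact le_trans (by positivity) hy

lemma fifteen_mul_primeCounting'_le_four_mul_add (m : ℕ) :
    15 * Nat.primeCounting' m ≤ 4 * m + 40 := by
  have hbase : ∀ k ≤ 160, 15 * Nat.primeCounting' k ≤ 4 * k + 40 := by
    intro k hk
    rw [← Nat.primesBelow_card_eq_primeCounting',
      primesBelow_eq_trialDivisionPrimes primesBelow_thirteen (by lia)]
    revert k
    decide +kernel
  rcases le_total m 160 with hm | hm
  · exact hbase m hm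
  · obtain ⟨k, rfl⟩ := Nat.exists_eq_add_of_le hm
    have h160 : Nat.primeCounting' 160 = 37 := by
      rw [← Nat.primesBelow_card_eq_primeCounting',
        primesBelow_eq_trialDivisionPrimes primesBelow_thirteen (by norm_num)]
      decide +kernel
    have htotient : Nat.totient 30 = 8 := by decide
    have := Nat.primeCounting'_add_le (a := 30) (k := 160) (by norm_num) (by norm_num) k
    lia

lemma fifteen_mul_le_four_mul_nth_prime_add (i : ℕ) : 15 * i ≤ 4 * Nat.nth Nat.Prime i + 40 := by
  simpa using fifteen_mul_primeCounting'_le_four_mul_add (Nat.nth Nat.Prime i)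

lemma mul_le_sum_range_nth_prime (n : ℕ) :
    n * ((15 * n - 95) / 8) ≤ ∑ i ∈ range n, (Nat.nth Nat.Prime i : ℝ) := by
  induction n with
  | zero => simp
  | succ n ih =>
    have hterm : (15 * n : ℝ) ≤ 4 * Nat.nth Nat.Prime n + 40 :=
      mod_cast fifteen_mul_le_four_mul_nth_prime_add n
    rw [sum_range_succ]
    push_cast
    linarith

lemma linear_le_avgPrime {n : ℕ} (hn : n ≠ 0) : (15 * n - 95) / 8 ≤ avgPrime n := by
  rw [avgPrime_eq_sum_range_div, le_div_iff₀' (by positivity)]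
  exact mul_le_sum_range_nth_prime n

lemma nth_prime_mul_log_two_le (n : ℕ) :
    Nat.nth Nat.Prime n * log 2 ≤
      (n + 1) * log (Nat.nth Nat.Prime n) + log (Nat.nth Nat.Prime n + 1) := by
  have hcount : Nat.primeCounting (Nat.nth Nat.Prime n) = n + 1 :=
    Nat.count_nth_succ_of_infinite Nat.infinite_setOfPred_prime n
  have hlower := Chebyshev.psi_ge (Nat.nth Nat.Prime n)
  have hupper := Chebyshev.psi_le_primeCounting_mul_log (Nat.nth Nat.Prime n)
  rw [hcount, Nat.cast_add_one] at hupper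
  linarith

-- The factor `1.15` is what remains of `15 / 8 * log 2 ≈ 1.2996` after absorbing the error terms.
lemma nth_prime_le_mul_log {n : ℕ} (hq : 700 ≤ Nat.nth Nat.Prime n) :
    1.15 * Nat.nth Nat.Prime n ≤ (15 * n - 95) / 8 * log (Nat.nth Nat.Prime n) := by
  have hchebyshev := nth_prime_mul_log_two_le n
  have hx : (700 : ℝ) ≤ Nat.nth Nat.Prime n := mod_cast hq
  set x : ℝ := ((Nat.nth Nat.Prime n : ℕ) : ℝ)
  have hlogSucc : log (x + 1) ≤ log x + 0.002 := by
    have hinv : x⁻¹ ≤ 0.002 := inv_le_of_inv_le₀ (by norm_num) (by linarith)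
    linarith [log_add_one_le_log_add_inv (x := x) (by positivity)]
  have hlog : log x ≤ x / 512 + 5.239 := by
    have := log_le_div_two_pow_add (x := x) (by positivity) 9
    norm_num at this ⊢
    linarith [log_two_lt_d9]
  have hlogTwo : x * 0.6931 ≤ x * log 2 := by
    gcongr
    linarith [log_two_gt_d9]
  linarith

lemma avgPrime_succ_pow_lt_of_le_nth_prime {n : ℕ} (hn : n ≠ 0)
    (hq : 700 ≤ Nat.nth Nat.Prime n) : avgPrime (n + 1) ^ n < avgPrime n ^ (n + 1) := by
  set x : ℝ := ((Nat.nth Nat.Prime n : ℕ) : ℝ) with hx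
  have hx1 : 1 < x := Nat.one_lt_cast.2 (Nat.prime_nth_prime n).one_lt
  have hlog : 0 < log x := log_pos hx1
  have hgap : 1.15 * x ≤ avgPrime n * log x := by
    grw [← linear_le_avgPrime hn]
    exact nth_prime_le_mul_log hq
  have havg : 1 < avgPrime n := by
    refine lt_of_mul_lt_mul_right ?_ hlog.le
    linarith [log_le_sub_one_of_pos (zero_lt_one.trans hx1)]
  rw [avgPrime_succ, ← hx]
  exact pow_lt_pow_succ_of_le_mul_one_add_log havg (by positivity)
    (le_mul_one_add_log_of_le_mul_log hx1 hgap) n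

lemma sum_primesBelow_pow_lt : ∀ q ∈ Nat.primesBelow 700, 2 < q →
    (q + ∑ p ∈ q.primesBelow, p) ^ #q.primesBelow * #q.primesBelow ^ (#q.primesBelow + 1) <
      (∑ p ∈ q.primesBelow, p) ^ (#q.primesBelow + 1) *
        (#q.primesBelow + 1) ^ #q.primesBelow := by
  intro q hq
  rw [primesBelow_eq_trialDivisionPrimes primesBelow_twenty_nine
    ((Nat.lt_of_mem_primesBelow hq).le.trans (by norm_num))]
  rw [primesBelow_eq_trialDivisionPrimes primesBelow_twenty_nine (by norm_num)] at hq
  revert q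
  decide +kernel

lemma avgPrime_succ_pow_lt_of_nth_prime_lt {n : ℕ} (hn : n ≠ 0) (hq : Nat.nth Nat.Prime n < 700) :
    avgPrime (n + 1) ^ n < avgPrime n ^ (n + 1) := by
  have hn' : (0 : ℝ) < n := by positivity
  have htwo : 2 < Nat.nth Nat.Prime n := by
    have := Nat.add_two_le_nth_prime n
    lia
  have hsum := sum_primesBelow_pow_lt _ (Nat.mem_primesBelow.2 ⟨hq, Nat.prime_nth_prime n⟩) htwo
  rw [card_primesBelow_nth_prime] at hsum
  rw [avgPrime_succ, avgPrime_eq_sum_primesBelow_div, mul_div_cancel₀ _ hn'.ne', add_comm, div_pow,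
    div_pow, div_lt_div_iff₀ (by positivity) (by positivity)]
  exact_mod_cast hsum

theorem stmt16 (n : ℕ) (hn : 1 ≤ n) :
    avgPrime (n + 1) ^ (1 / ((n : ℝ) + 1)) < avgPrime n ^ (1 / (n : ℝ)) := by
  have hn0 : n ≠ 0 := Nat.one_le_iff_ne_zero.1 hn
  rw [← Nat.cast_add_one, rpow_one_div_lt_rpow_one_div_iff (avgPrime_nonneg _) (avgPrime_nonneg _)
    n.succ_ne_zero hn0]
  rcases lt_or_ge (Nat.nth Nat.Prime n) 700 with hsmall | hlarge
  · exact avgPrime_succ_pow_lt_of_nth_prime_lt hn0 hsmall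
  · exact avgPrime_succ_pow_lt_of_le_nth_prime hn0 hlarge
end

section
/- For every integer n ≥ 1, the averaged-prime analogue of the Fourges conjecture holds: (ln p̄_{n+1} / ln p̄_n)^n < e, where e is Euler's number. -/
open Finset Real

/-!
Write `a = p̄_n` and `q = p_{n+1}`. The tangent line of `log` at `a` gives
`log p̄_{n+1} / log a ≤ 1 + (p̄_{n+1} - a) / (a log a) ≤ exp ((p̄_{n+1} - a) / (a log a))`, so it is
enough that `n (p̄_{n+1} - a) < a log a`. As `(n + 1) (p̄_{n+1} - a) = q - a`, this follows from
`q - a ≤ a log a`, which holds for `n = 1`, `n = 3` and all `n ≥ 5`.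

For `q ≥ 600`, Chebyshev's bound gives `n + 1 ≳ q log 2 / log q`, while sieving by `2, 3, 5` gives
`a ≳ (15 / 8) n`. Because `(15 / 8) log 2 > 23 / 20`, together they yield `a log q ≥ (23 / 20) q`,
and this implies the claim. For smaller `q` a few numerical checks are enough: `a` is nondecreasing
in `n`, so a lower bound for `a` at one prime serves a whole range of later primes.
-/

section LogTangent

variable {x c : ℝ}

lemma log_le_log_add_div_sub_one (hx : 0 < x) (hc : 0 < c) : log x ≤ log c + x / c - 1 := by
  have h := log_le_sub_one_of_pos (div_pos hx hc)
  rw [log_div hx.ne' hc.ne'] at h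
  linarith

lemma mul_one_add_log_sub_le_mul_log (hx : 0 < x) (hc : 0 < c) :
    x * (1 + log c) - c ≤ x * log x := by
  have h := mul_le_mul_of_nonneg_left (log_le_log_add_div_sub_one hc hx) hx.le
  have hcancel : x * (log x + c / x - 1) = x * log x + c - x := by field_simp
  linarith

end LogTangent

lemma log_div_log_pow_lt_exp_one {a b : ℝ} {n : ℕ} (ha : 1 < a) (hb : 1 ≤ b)
    (h : n * (b - a) < a * log a) : (log b / log a) ^ n < exp 1 := by
  have ha₀ : 0 < a := one_pos.trans ha
  have hlog : 0 < log a := log_pos ha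
  have hratio : log b / log a ≤ (b - a) / (a * log a) + 1 := by
    rw [div_le_iff₀ hlog]
    calc log b ≤ log a + b / a - 1 := log_le_log_add_div_sub_one (by linarith) ha₀
      _ = ((b - a) / (a * log a) + 1) * log a := by field_simp; ring
  calc (log b / log a) ^ n
      ≤ exp ((b - a) / (a * log a)) ^ n :=
        pow_le_pow_left₀ (div_nonneg (log_nonneg hb) hlog.le) (hratio.trans (add_one_le_exp _)) n
    _ = exp (n * ((b - a) / (a * log a))) := (exp_nat_mul _ n).symm
    _ < exp 1 := by
        rw [exp_lt_exp, ← mul_div_assoc, div_lt_one (by positivity)]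
        exact h

section NthPrime

lemma nthPrime_mono : Monotone nthPrime := fun _ _ h ↦
  Nat.nth_monotone Nat.infinite_setOfPred_prime (Nat.sub_le_sub_right h 1)

lemma primeCounting'_nthPrime_succ (n : ℕ) : Nat.primeCounting' (nthPrime (n + 1)) = n :=
  Nat.primeCounting'_nth_eq n

lemma primeCounting_nthPrime_succ (n : ℕ) : Nat.primeCounting (nthPrime (n + 1)) = n + 1 :=
  Nat.count_nth_succ_of_infinite Nat.infinite_setOfPred_prime n

lemma nthPrime_primeCounting'_succ {p : ℕ} (hp : p.Prime) :
    nthPrime (Nat.primeCounting' p + 1) = p :=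
  Nat.nth_count hp

lemma sum_nthPrime_primeCounting' (x : ℕ) :
    ∑ i ∈ Icc 1 (Nat.primeCounting' x), nthPrime i = ∑ p ∈ Nat.primesBelow x, p := by
  induction x with
  | zero => simp [Nat.primeCounting']
  | succ x ih =>
    by_cases hx : x.Prime
    · have hcount : Nat.primeCounting' (x + 1) = Nat.primeCounting' x + 1 := by
        simp [Nat.primeCounting', Nat.count_succ, hx]
      rw [hcount, sum_Icc_succ_top (by lia), ih, nthPrime_primeCounting'_succ hx,
        Nat.primesBelow_succ, if_pos hx, sum_insert (Nat.notMem_primesBelow x), add_comm]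
    · have hcount : Nat.primeCounting' (x + 1) = Nat.primeCounting' x := by
        simp [Nat.primeCounting', Nat.count_succ, hx]
      rw [hcount, ih, Nat.primesBelow_succ, if_neg hx]

lemma nthPrime_mul_log_two_sub_log_le (n : ℕ) :
    nthPrime (n + 1) * log 2 - log (nthPrime (n + 1) + 1) ≤ (n + 1) * log (nthPrime (n + 1)) := by
  have hlog : 0 < log (nthPrime (n + 1)) :=
    log_pos (mod_cast (Nat.prime_nth_prime n).one_lt)
  have h := Chebyshev.pi_ge (nthPrime (n + 1))
  rw [primeCounting_nthPrime_succ, div_le_iff₀ hlog] at h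
  exact_mod_cast h

-- One of `k` and `k + 29` is composite, so `Nat.primeCounting'_add_le` need only be applied to a
-- window of length 29.
lemma primeCounting'_add_thirty_le {k : ℕ} (hk : 30 < k) :
    Nat.primeCounting' (k + 30) ≤ Nat.primeCounting' k + 8 := by
  have htotient : Nat.totient 30 = 8 := by decide +kernel
  by_cases hprime : k.Prime
  · have hcomposite : ¬ (k + 29).Prime := fun h ↦ by
      have hodd_k := hprime.eq_two_or_odd
      have hodd := h.eq_two_or_odd
      lia
    have hlast : Nat.primeCounting' (k + 30) = Nat.primeCounting' (k + 29) := by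
      simp [Nat.primeCounting', Nat.count_succ, hcomposite]
    have hsieve := Nat.primeCounting'_add_le (by decide) hk 29
    lia
  · have hfirst : Nat.primeCounting' (k + 1) = Nat.primeCounting' k := by
      simp [Nat.primeCounting', Nat.count_succ, hprime]
    have hsieve := Nat.primeCounting'_add_le (by decide) (show 30 < k + 1 by lia) 29
    rw [show k + 1 + 29 = k + 30 by lia] at hsieve
    lia

lemma mul_primeCounting'_le (x : ℕ) : 15 * Nat.primeCounting' x ≤ 4 * x + 40 := by
  induction x using Nat.strong_induction_on with
  | _ x ih =>
    rcases lt_or_ge x 61 with hx | hx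
    · have hsmall : ∀ y < 61, 15 * Nat.primeCounting' y ≤ 4 * y + 40 := by decide +kernel
      exact hsmall x hx
    · obtain ⟨k, rfl⟩ := Nat.exists_eq_add_of_le' (show 30 ≤ x by lia)
      have hk := ih k (by lia)
      have hstep := primeCounting'_add_thirty_le (show 30 < k by lia)
      lia

lemma mul_succ_le_mul_nthPrime_succ_add (n : ℕ) : 15 * (n + 1) ≤ 4 * nthPrime (n + 1) + 44 := by
  have h := mul_primeCounting'_le (nthPrime (n + 1) + 1)
  rw [← Nat.primeCounting_eq_primeCounting'_succ, primeCounting_nthPrime_succ] at h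
  lia

end NthPrime

section AvgPrime

variable {n : ℕ}

lemma natCast_mul_avgPrime (n : ℕ) : n * avgPrime n = ∑ i ∈ Icc 1 n, (nthPrime i : ℝ) := by
  rcases n.eq_zero_or_pos with rfl | hn
  · simp
  · rw [avgPrime]
    field_simp

lemma succ_mul_avgPrime_succ (n : ℕ) :
    (n + 1) * avgPrime (n + 1) = n * avgPrime n + nthPrime (n + 1) := by
  have h := natCast_mul_avgPrime (n + 1)
  rw [sum_Icc_succ_top (by lia), ← natCast_mul_avgPrime] at h
  exact_mod_cast h

lemma avgPrime_le_nthPrime_succ (n : ℕ) : avgPrime n ≤ nthPrime (n + 1) := by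
  rcases n.eq_zero_or_pos with rfl | hn
  · simp [avgPrime]
  · have hsum : ∑ i ∈ Icc 1 n, (nthPrime i : ℝ) ≤ n * nthPrime (n + 1) := by
      have h : ∀ i ∈ Icc 1 n, (nthPrime i : ℝ) ≤ nthPrime (n + 1) := fun i hi ↦
        mod_cast nthPrime_mono ((mem_Icc.mp hi).2.trans n.le_succ)
      simpa using sum_le_card_nsmul _ _ _ h
    rw [← natCast_mul_avgPrime] at hsum
    exact le_of_mul_le_mul_left hsum (mod_cast hn)

lemma avgPrime_mono : Monotone avgPrime := by
  refine monotone_nat_of_le_succ fun n ↦ ?_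
  have hpos : (0 : ℝ) < n + 1 := by positivity
  refine le_of_mul_le_mul_left ?_ hpos
  rw [succ_mul_avgPrime_succ]
  linarith [avgPrime_le_nthPrime_succ n]

lemma avgPrime_one : avgPrime 1 = 2 := by
  simp [avgPrime, nthPrime]

lemma avgPrime_two : avgPrime 2 = 5 / 2 := by
  have h := succ_mul_avgPrime_succ 1
  norm_num [avgPrime_one, nthPrime] at h
  linarith

lemma avgPrime_three : avgPrime 3 = 10 / 3 := by
  have h := succ_mul_avgPrime_succ 2
  norm_num [avgPrime_two, nthPrime] at h
  linarith

lemma avgPrime_four : avgPrime 4 = 17 / 4 := by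
  have h := succ_mul_avgPrime_succ 3
  norm_num [avgPrime_three, nthPrime] at h
  linarith

lemma avgPrime_five : avgPrime 5 = 28 / 5 := by
  have hp : nthPrime 5 = 11 := nthPrime_primeCounting'_succ (p := 11) (by norm_num)
  have h := succ_mul_avgPrime_succ 4
  norm_num [avgPrime_four, hp] at h
  linarith

lemma two_le_avgPrime (hn : 1 ≤ n) : 2 ≤ avgPrime n :=
  avgPrime_one ▸ avgPrime_mono hn

lemma primeCounting'_mul_avgPrime_primeCounting' (x : ℕ) :
    Nat.primeCounting' x * avgPrime (Nat.primeCounting' x) = (∑ p ∈ Nat.primesBelow x, p : ℕ) := by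
  rw [natCast_mul_avgPrime, ← sum_nthPrime_primeCounting', Nat.cast_sum]

lemma mul_succ_sub_le_avgPrime (hn : 1 ≤ n) : 15 / 8 * ((n : ℝ) + 1) - 11 ≤ avgPrime n := by
  have h : ∀ m : ℕ, m * (15 / 8 * ((m : ℝ) + 1) - 11) ≤ m * avgPrime m := by
    intro m
    induction m with
    | zero => simp
    | succ m ih =>
      have hp : (15 * (m + 1) : ℝ) ≤ 4 * nthPrime (m + 1) + 44 :=
        mod_cast mul_succ_le_mul_nthPrime_succ_add m
      push_cast
      rw [succ_mul_avgPrime_succ]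
      linarith
  exact le_of_mul_le_mul_left (h n) (mod_cast hn)

lemma mul_avgPrime_succ_sub_lt (hn : 1 ≤ n)
    (h : nthPrime (n + 1) - avgPrime n ≤ avgPrime n * log (avgPrime n)) :
    n * (avgPrime (n + 1) - avgPrime n) < avgPrime n * log (avgPrime n) := by
  have ha := two_le_avgPrime hn
  have hpos : 0 < avgPrime n * log (avgPrime n) :=
    mul_pos (by linarith) (log_pos (by linarith))
  have hrec := succ_mul_avgPrime_succ n
  rcases (avgPrime_mono n.le_succ).eq_or_lt with heq | hlt
  · simpa [← heq] using hpos
  · linarith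

end AvgPrime

section LargePrimes

variable {q m a : ℝ}

lemma mul_le_mul_log_of_chebyshev (hq : 600 ≤ q)
    (hm : q * log 2 - log (q + 1) ≤ m * log q) (ha : 15 / 8 * m - 11 ≤ a) :
    23 / 20 * q ≤ a * log q := by
  have hq₀ : 0 < q := by linarith
  have hlog_succ : log (q + 1) ≤ log q + 1 / 600 := by
    have h := log_le_log_add_div_sub_one (show 0 < q + 1 by linarith) hq₀
    have hinv : 1 / q ≤ 1 / 600 := one_div_le_one_div_of_le (by norm_num) hq
    rw [add_div, div_self hq₀.ne'] at h
    linarith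
  have hlog : log q ≤ 9 * log 2 + q / 512 - 1 := by
    have h := log_le_log_add_div_sub_one hq₀ (show (0 : ℝ) < 2 ^ 9 by norm_num)
    rw [log_pow] at h
    norm_num at h
    linarith
  calc 23 / 20 * q ≤ 15 / 8 * (q * log 2 - log (q + 1)) - 11 * log q := by
        nlinarith [log_two_gt_d9, log_two_lt_d9]
    _ ≤ (15 / 8 * m - 11) * log q := by linarith
    _ ≤ a * log q := mul_le_mul_of_nonneg_right ha (log_nonneg (by linarith))

lemma sub_le_mul_log_of_mul_le_mul_log (hq : 1 < q) (h : 23 / 20 * q ≤ a * log q) :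
    q - a ≤ a * log a := by
  have hL : 0 < log q := log_pos hq
  set c := q / log q with hc
  have hc₀ : 0 < c := by positivity
  have hca : 23 / 20 * c ≤ a := by rwa [hc, ← mul_div_assoc, div_le_iff₀ hL]
  have hlog_c : log c = log q - log (log q) := log_div (by positivity) hL.ne'
  have hloglog : log (log q) ≤ 3 * log 2 + log q / 8 - 1 := by
    have h := log_le_log_add_div_sub_one hL (show (0 : ℝ) < 2 ^ 3 by norm_num)
    rw [log_pow] at h
    norm_num at h
    linarith
  have hgrowth : 1 + log q ≤ 23 / 20 * (2 + log c) := by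
    linarith [log_two_lt_d9]
  have hmain : c + q ≤ a * (2 + log c) :=
    calc c + q = c * (1 + log q) := by rw [hc]; field_simp
      _ ≤ c * (23 / 20 * (2 + log c)) := by gcongr
      _ = 23 / 20 * c * (2 + log c) := by ring
      _ ≤ a * (2 + log c) := mul_le_mul_of_nonneg_right hca (by linarith)
  linarith [mul_one_add_log_sub_le_mul_log (show 0 < a by linarith) hc₀]

end LargePrimes

section GapBounds

variable {n : ℕ}

lemma nthPrime_succ_sub_avgPrime_le_of_ge (hn : 1 ≤ n) (hq : 600 ≤ nthPrime (n + 1)) :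
    nthPrime (n + 1) - avgPrime n ≤ avgPrime n * log (avgPrime n) := by
  have hq' : (600 : ℝ) ≤ nthPrime (n + 1) := mod_cast hq
  refine sub_le_mul_log_of_mul_le_mul_log (by linarith) ?_
  exact mul_le_mul_log_of_chebyshev hq' (nthPrime_mul_log_two_sub_log_le n)
    (mul_succ_sub_le_avgPrime hn)

-- The hypothesis bounds `y` by the tangent line of `t ↦ t * (1 + log t)` at `2 ^ k`, evaluated at
-- the mean of the primes below `x`, with `log 2` replaced by `0.693`.
lemma nthPrime_succ_sub_avgPrime_le_of_mem_Icc {x y k : ℕ} (hx : 2 < x)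
    (h : 1000 * (y + 2 ^ k) * #(Nat.primesBelow x) ≤ (2000 + 693 * k) * ∑ p ∈ Nat.primesBelow x, p)
    (hq : nthPrime (n + 1) ∈ Set.Icc x y) :
    nthPrime (n + 1) - avgPrime n ≤ avgPrime n * log (avgPrime n) := by
  set N := Nat.primeCounting' x with hN
  have hN₀ : 0 < N := Nat.pos_of_ne_zero fun h ↦ by
    rw [Nat.primeCounting'_eq_zero_iff] at h
    lia
  have hNn : N ≤ n := primeCounting'_nthPrime_succ n ▸ Nat.monotone_primeCounting' hq.1
  have hmean : 1000 * (y + 2 ^ k) ≤ (2000 + 693 * k) * avgPrime N := by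
    rw [Nat.primesBelow_card_eq_primeCounting'] at h
    have h' : (1000 * (y + 2 ^ k) * N : ℝ) ≤ (2000 + 693 * k) * (N * avgPrime N) := by
      rw [primeCounting'_mul_avgPrime_primeCounting']
      exact_mod_cast h
    refine le_of_mul_le_mul_right (h'.trans_eq ?_) (Nat.cast_pos.mpr hN₀)
    ring
  have ha := avgPrime_mono hNn
  have ha₀ : 0 < avgPrime n := by linarith [two_le_avgPrime (hN₀.trans_le hNn)]
  have hy : y + 2 ^ k ≤ avgPrime n * (2 + k * log 2) := by
    calc (y + 2 ^ k : ℝ) ≤ avgPrime N * (2 + k * 0.693) := by linarith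
      _ ≤ avgPrime n * (2 + k * log 2) := by
        gcongr
        linarith [log_two_gt_d9]
  have htangent := mul_one_add_log_sub_le_mul_log ha₀ (show (0 : ℝ) < 2 ^ k by positivity)
  rw [log_pow] at htangent
  have hqy : (nthPrime (n + 1) : ℝ) ≤ y := mod_cast hq.2
  linarith

lemma nthPrime_succ_sub_avgPrime_le_of_lt (hn : 5 ≤ n) (hq : nthPrime (n + 1) < 600) :
    nthPrime (n + 1) - avgPrime n ≤ avgPrime n * log (avgPrime n) := by
  have hq₁₃ : 13 ≤ nthPrime (n + 1) := by
    have h : nthPrime 6 = 13 := nthPrime_primeCounting'_succ (p := 13) (by norm_num)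
    exact h ▸ nthPrime_mono (show 6 ≤ n + 1 by lia)
  have hcover : nthPrime (n + 1) ∈ Set.Icc 13 14 ∨ nthPrime (n + 1) ∈ Set.Icc 15 19 ∨
      nthPrime (n + 1) ∈ Set.Icc 20 31 ∨ nthPrime (n + 1) ∈ Set.Icc 32 53 ∨
      nthPrime (n + 1) ∈ Set.Icc 54 98 ∨ nthPrime (n + 1) ∈ Set.Icc 99 199 ∨
      nthPrime (n + 1) ∈ Set.Icc 200 239 ∨ nthPrime (n + 1) ∈ Set.Icc 240 599 := by
    simp only [Set.mem_Icc]
    lia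
  rcases hcover with h | h | h | h | h | h | h | h
  · exact nthPrime_succ_sub_avgPrime_le_of_mem_Icc (k := 2) (by decide) (by decide +kernel) h
  · exact nthPrime_succ_sub_avgPrime_le_of_mem_Icc (k := 3) (by decide) (by decide +kernel) h
  · exact nthPrime_succ_sub_avgPrime_le_of_mem_Icc (k := 3) (by decide) (by decide +kernel) h
  · exact nthPrime_succ_sub_avgPrime_le_of_mem_Icc (k := 4) (by decide) (by decide +kernel) h
  · exact nthPrime_succ_sub_avgPrime_le_of_mem_Icc (k := 5) (by decide) (by decide +kernel) h
  · exact nthPrime_succ_sub_avgPrime_le_of_mem_Icc (k := 5) (by decide) (by decide +kernel) h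
  · exact nthPrime_succ_sub_avgPrime_le_of_mem_Icc (k := 6) (by decide) (by decide +kernel) h
  · exact nthPrime_succ_sub_avgPrime_le_of_mem_Icc (k := 7) (by decide) (by decide +kernel) h

-- For `n = 2` and `n = 4` the bound `p_{n+1} - p̄_n ≤ p̄_n * log p̄_n` fails.
lemma mul_avgPrime_succ_sub_lt_of_lt_five (hn : 1 ≤ n) (hn₅ : n < 5) :
    n * (avgPrime (n + 1) - avgPrime n) < avgPrime n * log (avgPrime n) := by
  have hlog₄ : log 4 = 2 * log 2 := by
    rw [show (4 : ℝ) = 2 ^ 2 by norm_num, log_pow, Nat.cast_ofNat]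
  have tangent {x : ℝ} (hx : 0 < x) (c : ℝ) (hc : 0 < c) := mul_one_add_log_sub_le_mul_log hx hc
  have hlog₂ := log_two_gt_d9
  interval_cases n
  · norm_num [avgPrime_one, avgPrime_two]
    linarith
  · norm_num [avgPrime_two, avgPrime_three]
    linarith [tangent (x := 5 / 2) (by norm_num) 2 (by norm_num)]
  · norm_num [avgPrime_three, avgPrime_four]
    linarith [tangent (x := 10 / 3) (by norm_num) 2 (by norm_num)]
  · norm_num [avgPrime_four, avgPrime_five]
    linarith [tangent (x := 17 / 4) (by norm_num) 4 (by norm_num)]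

end GapBounds

theorem stmt17 (n : ℕ) (hn : 1 ≤ n) :
    (Real.log (avgPrime (n + 1)) / Real.log (avgPrime n)) ^ n < Real.exp 1 := by
  have ha := two_le_avgPrime hn
  have hmono : avgPrime n ≤ avgPrime (n + 1) := avgPrime_mono n.le_succ
  refine log_div_log_pow_lt_exp_one (by linarith) (by linarith) ?_
  rcases lt_or_ge n 5 with hn₅ | hn₅
  · exact mul_avgPrime_succ_sub_lt_of_lt_five hn hn₅
  · refine mul_avgPrime_succ_sub_lt hn ?_
    rcases lt_or_ge (nthPrime (n + 1)) 600 with hq | hq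
    · exact nthPrime_succ_sub_avgPrime_le_of_lt hn₅ hq
    · exact nthPrime_succ_sub_avgPrime_le_of_ge hn hq
end
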